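/- Let p ∈ (0, 1), 0 < T_slot ≤ T_s, T_payload > 0, m ∈ ℕ, d ≥ 0 with d·(1−p)·T_payload < p^{m+1}·T_slot, and l, e₀, f₀ ∈ ℝ. Then for any 0 ≤ a ≤ b, the Adaptive Backoff utility V(w) = d·(1−p)·T_payload/(T_slot·(p·w + 1) + T_s − T_slot) − l·(e₀·w + f₀) − p^{m+1}/(p·w + 1) has a unique maximizer on [a, b]: there exists exactly one w* ∈ [a, b] with V(w) ≤ V(w*) for all w ∈ [a, b]. (Existence and uniqueness of the Nash equilibrium contention window in each stage of the Adaptive Backoff Game.) -/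

import Mathlib

/-!
The utility is strictly concave wherever `p * w + 1` is positive; on a compact interval a strictly
concave continuous function has exactly one maximizer.

Up to rescaling, the non-affine part of the utility is `α / (w + v) - γ / (w + u)` with `u ≤ v`,
`α < γ` and `0 < γ`. With `α⁺` and `α⁻` the positive and negative parts of `α`, it equals
`-(α⁺ * (1 / (w + u) - 1 / (w + v)) + α⁻ / (w + v) + (γ - α⁺) / (w + u))`. The last summand is
strictly convex since `α⁺ < γ`, and the difference of reciprocals is convex, being the multiple
`v - u` of a product of two positive decreasing convex functions.
-/

open Set

theorem existsUnique_isMaxOn_of_strictConcaveOn {E : Type*} [AddCommMonoid E] [SMul ℝ E]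
    [TopologicalSpace E] {s : Set E} {f : E → ℝ} (hf : StrictConcaveOn ℝ s f)
    (hcont : ContinuousOn f s) (hs : IsCompact s) (hne : s.Nonempty) :
    ∃! x, x ∈ s ∧ IsMaxOn f s x := by
  obtain ⟨x, hx, hmax⟩ := hs.exists_isMaxOn hne hcont
  exact ⟨x, ⟨hx, hmax⟩, fun y hy ↦ hf.eq_of_isMaxOn hy.2 hmax hy.1 hx⟩

theorem strictConvexOn_const_smul {𝕜 E β : Type*} [CommSemiring 𝕜] [PartialOrder 𝕜]
    [AddCommMonoid E] [SMul 𝕜 E] [AddCommMonoid β] [PartialOrder β] [Module 𝕜 β]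
    [PosSMulStrictMono 𝕜 β] {s : Set E} {f : E → β} {c : 𝕜} (hc : 0 < c)
    (hf : StrictConvexOn 𝕜 s f) : StrictConvexOn 𝕜 s fun x ↦ c • f x := by
  refine ⟨hf.1, fun x hx y hy hxy a b ha hb hab ↦ ?_⟩
  calc c • f (a • x + b • y) < c • (a • f x + b • f y) :=
        smul_lt_smul_of_pos_left (hf.2 hx hy hxy ha hb hab) hc
    _ = a • c • f x + b • c • f y := by rw [smul_add, smul_comm c, smul_comm c]

theorem convexOn_mul_add {s : Set ℝ} (hs : Convex ℝ s) (e f : ℝ) :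
    ConvexOn ℝ s fun x ↦ e * x + f :=
  ((LinearMap.mulLeft ℝ e).convexOn hs).add_const f

theorem strictConvexOn_inv_add (u : ℝ) : StrictConvexOn ℝ (Ioi (-u)) fun x ↦ (x + u)⁻¹ := by
  have hinv : StrictConvexOn ℝ (Ioi 0) fun x : ℝ ↦ x ^ (-1 : ℤ) :=
    strictConvexOn_zpow (by norm_num) (by norm_num)
  simpa [Function.comp_def, add_comm u] using hinv.translate_right u

theorem antitoneOn_inv_add (u : ℝ) : AntitoneOn (fun x ↦ (x + u)⁻¹) (Ioi (-u)) := by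
  intro x hx y _ hxy
  have hxu : 0 < x + u := neg_lt_iff_pos_add.mp hx
  dsimp only
  gcongr

section

variable {u v : ℝ}

theorem convexOn_inv_add_sub_inv_add (huv : u ≤ v) :
    ConvexOn ℝ (Ioi (-u)) fun x ↦ (x + u)⁻¹ - (x + v)⁻¹ := by
  have hsub : Ioi (-u) ⊆ Ioi (-v) := Ioi_subset_Ioi (neg_le_neg huv)
  have hpos {t x : ℝ} (hx : x ∈ Ioi (-t)) : 0 < x + t := neg_lt_iff_pos_add.mp hx
  have hprod : ConvexOn ℝ (Ioi (-u)) fun x ↦ (x + u)⁻¹ * (x + v)⁻¹ :=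
    (strictConvexOn_inv_add u).convexOn.mul
      ((strictConvexOn_inv_add v).convexOn.subset hsub (convex_Ioi _))
      (fun _ hx ↦ (inv_pos.mpr (hpos hx)).le) (fun _ hx ↦ (inv_pos.mpr (hpos (hsub hx))).le)
      ((antitoneOn_inv_add u).monovaryOn ((antitoneOn_inv_add v).mono hsub))
  refine (hprod.smul (sub_nonneg.mpr huv)).congr fun x hx ↦ ?_
  have hxu : x + u ≠ 0 := (hpos hx).ne'
  have hxv : x + v ≠ 0 := (hpos (hsub hx)).ne'
  simp only [smul_eq_mul]
  field_simp
  ring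

theorem strictConcaveOn_div_add_sub_div_add {α γ : ℝ} (huv : u ≤ v) (hαγ : α < γ) (hγ : 0 < γ) :
    StrictConcaveOn ℝ (Ioi (-u)) fun x ↦ α / (x + v) - γ / (x + u) := by
  have hgap : ConvexOn ℝ (Ioi (-u)) fun x ↦ α⁺ * ((x + u)⁻¹ - (x + v)⁻¹) :=
    (convexOn_inv_add_sub_inv_add huv).smul (posPart_nonneg α)
  have hneg : ConvexOn ℝ (Ioi (-u)) fun x ↦ α⁻ * (x + v)⁻¹ :=
    ((strictConvexOn_inv_add v).convexOn.subset (Ioi_subset_Ioi (neg_le_neg huv))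
      (convex_Ioi _)).smul (negPart_nonneg α)
  have hstrict : StrictConvexOn ℝ (Ioi (-u)) fun x ↦ (γ - α⁺) * (x + u)⁻¹ :=
    strictConvexOn_const_smul (sub_pos.mpr (max_lt hαγ hγ)) (strictConvexOn_inv_add u)
  refine ((hgap.add hneg).add_strictConvexOn hstrict).neg.congr fun x _ ↦ ?_
  simp only [Pi.neg_apply, Pi.add_apply]
  linear_combination (x + v)⁻¹ * posPart_sub_negPart α

end

section

variable {p Tslot Ts A C : ℝ}

theorem strictConcaveOn_goodput_sub_drop (hp : 0 < p) (hTslot : 0 < Tslot) (hTs : Tslot ≤ Ts)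
    (hC : 0 < C) (hAC : A < C * Tslot) :
    StrictConcaveOn ℝ (Ioi (-p⁻¹))
      fun w ↦ A / (Tslot * (p * w + 1) + Ts - Tslot) - C / (p * w + 1) := by
  have hshift : p⁻¹ ≤ Ts / (Tslot * p) := by
    rw [← div_div, inv_eq_one_div]
    exact div_le_div_of_nonneg_right ((one_le_div hTslot).mpr hTs) hp.le
  have hcoef : A / (Tslot * p) < C / p := by
    rw [← div_div]
    exact div_lt_div_of_pos_right ((div_lt_iff₀ hTslot).mpr hAC) hp
  refine (strictConcaveOn_div_add_sub_div_add hshift hcoef (by positivity)).congr fun w _ ↦ ?_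
  have hgoodput : Tslot * (p * w + 1) + Ts - Tslot = Tslot * p * (w + Ts / (Tslot * p)) := by
    field_simp
    ring
  have hdrop : p * w + 1 = p * (w + p⁻¹) := by field_simp
  dsimp only
  rw [hgoodput, hdrop, div_div, div_div]

theorem stmt14_general (hp : 0 < p) (hTslot : 0 < Tslot) (hTs : Tslot ≤ Ts) (hC : 0 < C)
    (hAC : A < C * Tslot) (l e₀ f₀ : ℝ) {a b : ℝ} (ha : 0 < p * a + 1) (hab : a ≤ b) :
    ∃! wstar : ℝ, wstar ∈ Icc a b ∧
      ∀ w ∈ Icc a b,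
        A / (Tslot * (p * w + 1) + Ts - Tslot) - l * (e₀ * w + f₀) - C / (p * w + 1) ≤
          A / (Tslot * (p * wstar + 1) + Ts - Tslot) - l * (e₀ * wstar + f₀)
            - C / (p * wstar + 1) := by
  have hconc : StrictConcaveOn ℝ (Ioi (-p⁻¹)) fun w ↦
      A / (Tslot * (p * w + 1) + Ts - Tslot) - l * (e₀ * w + f₀) - C / (p * w + 1) :=
    ((strictConcaveOn_goodput_sub_drop hp hTslot hTs hC hAC).sub_convexOn
      (convexOn_mul_add (convex_Ioi _) (l * e₀) (l * f₀))).congr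
      fun w _ ↦ by simp only [Pi.sub_apply]; ring
  have hsub : Icc a b ⊆ Ioi (-p⁻¹) := fun w hw ↦ by
    have hpa : -p⁻¹ < a := by
      rw [inv_eq_one_div, ← neg_div, div_lt_iff₀ hp]
      linarith
    exact hpa.trans_le hw.1
  exact existsUnique_isMaxOn_of_strictConcaveOn (hconc.subset hsub (convex_Icc a b))
    ((hconc.concaveOn.continuousOn isOpen_Ioi).mono hsub) isCompact_Icc (nonempty_Icc.mpr hab)

end

/-- Existence and uniqueness of the Nash-equilibrium contention window in each stage of
the Adaptive Backoff Game: the utility `V` has exactly one maximizer on any window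
interval `[a, b] ⊆ [0, ∞)`. -/
theorem stmt14 (p Tslot Ts Tpayload : ℝ) (hp : p ∈ Set.Ioo (0 : ℝ) 1)
    (hTslot : 0 < Tslot) (hTs : Tslot ≤ Ts) (hTp : 0 < Tpayload)
    (m : ℕ) (d : ℝ) (hd : 0 ≤ d)
    (hsmall : d * (1 - p) * Tpayload < p ^ (m + 1) * Tslot) (l e₀ f₀ : ℝ)
    (a b : ℝ) (ha : 0 ≤ a) (hab : a ≤ b) :
    ∃! wstar : ℝ, wstar ∈ Set.Icc a b ∧
      ∀ w ∈ Set.Icc a b,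
        d * (1 - p) * Tpayload / (Tslot * (p * w + 1) + Ts - Tslot)
            - l * (e₀ * w + f₀) - p ^ (m + 1) / (p * w + 1) ≤
          d * (1 - p) * Tpayload / (Tslot * (p * wstar + 1) + Ts - Tslot)
            - l * (e₀ * wstar + f₀) - p ^ (m + 1) / (p * wstar + 1) := by
  have hpa : 0 < p * a + 1 := add_pos_of_nonneg_of_pos (mul_nonneg hp.1.le ha) one_pos
  exact stmt14_general hp.1 hTslot hTs (pow_pos hp.1 _) hsmall l e₀ f₀ hpa hab
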